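/- Let μ be a weak Gibbs measure for an asymptotically additive sequence Φ = (φ_n)_n on a topologically mixing one-sided subshift of finite type (Σ,σ). Then there exists an asymptotically additive sequence Ψ = (ψ_n)_n on Σ such that μ is a Gibbs measure for Ψ; in fact one may take ψ_n(ω) := log μ(C_{i₁…i_n}) for ω ∈ C_{i₁…i_n}, and then P(Ψ) = 0 and μ(C_{i₁…i_n})/exp(ψ_n(ω) − nP(Ψ)) = 1 for every n, every cylinder C_{i₁…i_n} and every ω ∈ C_{i₁…i_n}. -/

import Mathlib

open MeasureTheory Filter Topology Set

namespace WG

/-- The one-sided subshift of finite type determined by a 0-1 transition matrix `M`. -/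
abbrev Space {k : ℕ} (M : Matrix (Fin k) (Fin k) ℕ) : Type :=
  {ω : ℕ → Fin k // ∀ i : ℕ, M (ω i) (ω (i + 1)) = 1}

variable {k : ℕ}

/-- The shift map on the subshift. -/
def shift (M : Matrix (Fin k) (Fin k) ℕ) (ω : Space M) : Space M :=
  ⟨fun i => ω.1 (i + 1), fun i => ω.2 (i + 1)⟩

/-- `M` is a 0-1 matrix and the subshift is topologically mixing:
some power of `M` has all entries strictly positive. -/
def Mixing (M : Matrix (Fin k) (Fin k) ℕ) : Prop :=
  (∀ i j, M i j = 0 ∨ M i j = 1) ∧ ∃ l : ℕ, 0 < l ∧ ∀ i j, 0 < (M ^ l) i j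

/-- The cylinder `C_{w₀ … w_{n-1}}`. -/
def cyl (M : Matrix (Fin k) (Fin k) ℕ) (n : ℕ) (w : Fin n → Fin k) : Set (Space M) :=
  {ω | ∀ j : Fin n, ω.1 j.1 = w j}

/-- The initial word of length `n` of a point `ω`. -/
def word (M : Matrix (Fin k) (Fin k) ℕ) (n : ℕ) (ω : Space M) : Fin n → Fin k :=
  fun j => ω.1 j.1

/-- Birkhoff sums `S_n f`. -/
noncomputable def birk (M : Matrix (Fin k) (Fin k) ℕ) (f : Space M → ℝ) (n : ℕ)
    (ω : Space M) : ℝ :=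
  ∑ j ∈ Finset.range n, f ((shift M)^[j] ω)

/-- The standard metric `d(ω,κ) = ∑ᵢ |ωᵢ - κᵢ| / 2^{i+1}` on the shift space. -/
noncomputable def dist' (M : Matrix (Fin k) (Fin k) ℕ) (ω κ : Space M) : ℝ :=
  ∑' i : ℕ, |((ω.1 i : ℕ) : ℝ) - ((κ.1 i : ℕ) : ℝ)| / 2 ^ (i + 1)

/-- `E` is an `(n,ε)`-separated set. -/
def IsSep (M : Matrix (Fin k) (Fin k) ℕ) (n : ℕ) (ε : ℝ) (E : Finset (Space M)) : Prop :=
  ∀ ω ∈ E, ∀ κ ∈ E, ω ≠ κ → ∃ i < n, ε < dist' M ((shift M)^[i] ω) ((shift M)^[i] κ)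

/-- `P(Φ, n, ε)`: supremum of `∑_{ω ∈ E} exp(φ_n ω)` over `(n,ε)`-separated sets `E`. -/
noncomputable def sepSum (M : Matrix (Fin k) (Fin k) ℕ) (Φ : ℕ → Space M → ℝ)
    (n : ℕ) (ε : ℝ) : ℝ :=
  sSup {s | ∃ E : Finset (Space M), IsSep M n ε E ∧ s = ∑ ω ∈ E, Real.exp (Φ n ω)}

/-- `P` is the topological pressure of the sequence `Φ`:
`P = lim_{ε→0⁺} limsup_n (1/n) log P(Φ,n,ε)`. -/
def IsPressure (M : Matrix (Fin k) (Fin k) ℕ) (Φ : ℕ → Space M → ℝ) (P : ℝ) : Prop :=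
  Tendsto (fun ε : ℝ => limsup (fun n : ℕ => Real.log (sepSum M Φ n ε) / n) atTop)
    (𝓝[>] (0 : ℝ)) (𝓝 P)

/-- The sequence `Φ = (φ_n)` is asymptotically additive. -/
def AsympAdd (M : Matrix (Fin k) (Fin k) ℕ) (Φ : ℕ → Space M → ℝ) : Prop :=
  (∀ n, Continuous (Φ n)) ∧
  ∀ ε > (0 : ℝ), ∃ ρ : Space M → ℝ, Continuous ρ ∧
    limsup (fun n : ℕ => (⨆ ω : Space M, |Φ n ω - birk M ρ n ω|) / n) atTop < ε

/-- `μ` is a weak Gibbs measure for the sequence `Φ` with constant `P`. -/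
def WeakGibbs (M : Matrix (Fin k) (Fin k) ℕ) (Φ : ℕ → Space M → ℝ) (P : ℝ)
    (μ : Measure (Space M)) : Prop :=
  ∃ K : ℕ → ℝ, (∀ n, 0 < K n) ∧ Tendsto (fun n : ℕ => Real.log (K n) / n) atTop (𝓝 0) ∧
    ∀ n : ℕ, ∀ w : Fin n → Fin k, ∀ ω ∈ cyl M n w,
      1 / K n ≤ (μ (cyl M n w)).toReal / Real.exp (Φ n ω - n * P) ∧
      (μ (cyl M n w)).toReal / Real.exp (Φ n ω - n * P) ≤ K n

/-- `μ` is a Gibbs measure for the sequence `Φ` with constant `P`. -/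
def Gibbs (M : Matrix (Fin k) (Fin k) ℕ) (Φ : ℕ → Space M → ℝ) (P : ℝ)
    (μ : Measure (Space M)) : Prop :=
  ∃ K : ℝ, 0 < K ∧
    ∀ n : ℕ, ∀ w : Fin n → Fin k, ∀ ω ∈ cyl M n w,
      1 / K ≤ (μ (cyl M n w)).toReal / Real.exp (Φ n ω - n * P) ∧
      (μ (cyl M n w)).toReal / Real.exp (Φ n ω - n * P) ≤ K

/-- Sum of `exp(φ_n ω)` over points of period `n`. -/
noncomputable def perSum (M : Matrix (Fin k) (Fin k) ℕ) (Φ : ℕ → Space M → ℝ) (n : ℕ) : ℝ :=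
  ∑' ω : {ω : Space M // (shift M)^[n] ω = ω}, Real.exp (Φ n ω.1)

/-- `var_n(g)`: the variation of `g` over cylinders of length `n`. -/
noncomputable def varCyl (M : Matrix (Fin k) (Fin k) ℕ) (n : ℕ) (g : Space M → ℝ) : ℝ :=
  sSup {x | ∃ ω κ : Space M, (∀ j : Fin n, ω.1 j.1 = κ.1 j.1) ∧ x = |g ω - g κ|}

open Classical in
/-- `∑_{C ∈ Z_n} exp (sup_C S_n φ)`: the cylinder partition sum of `φ`. -/
noncomputable def cylSum (M : Matrix (Fin k) (Fin k) ℕ) (φ : Space M → ℝ) (n : ℕ) : ℝ :=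
  ∑ w ∈ Finset.univ.filter (fun w : Fin n → Fin k => (cyl M n w).Nonempty),
    Real.exp (sSup (birk M φ n '' cyl M n w))

end WG

namespace WG

theorem aux_limsup (u v e : ℕ → ℝ) (hu : ∀ n, 0 ≤ u n) (hv : ∀ n, 0 ≤ v n)
    (he : Tendsto e atTop (𝓝 0)) (h1 : ∀ᶠ n in atTop, v n ≤ u n + e n)
    (h2 : ∀ᶠ n in atTop, u n ≤ v n + e n) (ε : ℝ) (hε : 0 < ε)
    (h : limsup u atTop < ε) : limsup v atTop < ε := by
  have hco : IsCoboundedUnder (· ≤ ·) atTop v :=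
    IsCoboundedUnder.of_frequently_ge (a := 0) (Frequently.of_forall hv)
  by_cases hb : ∃ a, ∀ᶠ n in atTop, u n ≤ a
  · obtain ⟨b, hb1, hb2⟩ := exists_between h
    have hbd : IsBoundedUnder (· ≤ ·) atTop u := by
      obtain ⟨a, ha⟩ := hb
      exact ⟨a, by simpa using ha⟩
    have h3 := eventually_lt_of_limsup_lt hb1 hbd
    have h4 : ∀ᶠ n in atTop, e n < (ε - b) / 2 := he.eventually_lt_const (by linarith)
    have : limsup v atTop ≤ b + (ε - b) / 2 := by
      refine limsup_le_of_le hco ?_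
      filter_upwards [h1, h3, h4] with n a1 a2 a3
      linarith
    linarith
  · have : {a | ∀ᶠ n in atTop, v n ≤ a} = ∅ := by
      ext a
      simp only [mem_setOf_eq, mem_empty_iff_false, iff_false]
      intro ha
      apply hb
      refine ⟨a + 1, ?_⟩
      have h4 : ∀ᶠ n in atTop, e n < 1 := he.eventually_lt_const (by norm_num)
      filter_upwards [ha, h2, h4] with n a1 a2 a3
      linarith
    rw [limsup_eq, this, Real.sInf_empty]
    exact hε

variable {k : ℕ} (M : Matrix (Fin k) (Fin k) ℕ)

theorem isCompact_space : CompactSpace (Space M) := by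
  apply isCompact_iff_compactSpace.mp
  apply IsClosed.isCompact
  have : {ω : ℕ → Fin k | ∀ i : ℕ, M (ω i) (ω (i + 1)) = 1}
      = ⋂ i, {ω : ℕ → Fin k | M (ω i) (ω (i + 1)) = 1} := by
    ext; simp
  change IsClosed {ω : ℕ → Fin k | ∀ i : ℕ, M (ω i) (ω (i + 1)) = 1}
  rw [this]
  refine isClosed_iInter fun i => ?_
  have hc : Continuous fun ω : ℕ → Fin k => M (ω i) (ω (i + 1)) := by
    have h1 : Continuous fun p : Fin k × Fin k => M p.1 p.2 := continuous_of_discreteTopology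
    have h2 : Continuous fun ω : ℕ → Fin k => (ω i, ω (i + 1)) :=
      (continuous_apply i).prodMk (continuous_apply (i+1))
    exact h1.comp h2
  exact isClosed_eq hc continuous_const

theorem cont_shift : Continuous (shift M) := by
  unfold shift
  refine Continuous.subtype_mk ?_ _
  exact continuous_pi fun i => (continuous_apply (i+1)).comp continuous_subtype_val

theorem cont_birk (f : Space M → ℝ) (hf : Continuous f) (n : ℕ) : Continuous (birk M f n) := by
  unfold birk
  exact continuous_finset_sum _ fun j _ => hf.comp ((cont_shift M).iterate j)

theorem cont_word (n : ℕ) : Continuous (word M n) := by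
  unfold word
  exact continuous_pi fun i => (continuous_apply _).comp continuous_subtype_val

theorem meas_word (n : ℕ) : Measurable (word M n) := by
  unfold word
  exact measurable_pi_lambda _ fun i => (measurable_pi_apply _).comp measurable_subtype_coe

theorem cyl_eq (n : ℕ) (w : Fin n → Fin k) : cyl M n w = word M n ⁻¹' {w} := by
  ext ω
  simp [cyl, word, funext_iff]

theorem mem_cyl_iff (n : ℕ) (w : Fin n → Fin k) (ω : Space M) :
    ω ∈ cyl M n w ↔ word M n ω = w := by
  rw [cyl_eq]; rfl

theorem sum_cyl (μ : Measure (Space M)) [IsProbabilityMeasure μ] (n : ℕ) :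
    ∑ w : Fin n → Fin k, (μ (cyl M n w)).toReal = 1 := by
  have := sum_measureReal_preimage_singleton (μ := μ) (f := word M n) Finset.univ
    (fun y _ => meas_word M n (measurableSet_singleton y))
  simp only [cyl_eq]
  simp only [Measure.real] at this
  rw [this]
  simp

theorem iter_shift (n : ℕ) (ω : Space M) (i : ℕ) : ((shift M)^[n] ω).1 i = ω.1 (i + n) := by
  induction n generalizing ω with
  | zero => rfl
  | succ n ih =>
    rw [Function.iterate_succ_apply, ih]
    simp only [shift]
    congr 1

theorem term_le (ω κ : Space M) (i : ℕ) :
    |((ω.1 i : ℕ) : ℝ) - ((κ.1 i : ℕ) : ℝ)| / 2 ^ (i + 1) ≤ (k : ℝ) / 2 / 2 ^ i := by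
  have h1 : ((ω.1 i : ℕ) : ℝ) ≤ k := by exact_mod_cast (ω.1 i).2.le
  have h2 : ((κ.1 i : ℕ) : ℝ) ≤ k := by exact_mod_cast (κ.1 i).2.le
  have h3 : (0 : ℝ) ≤ ((ω.1 i : ℕ) : ℝ) := by positivity
  have h4 : (0 : ℝ) ≤ ((κ.1 i : ℕ) : ℝ) := by positivity
  rw [div_div, pow_succ', ]
  gcongr
  rw [abs_le]; constructor <;> linarith

theorem summ (ω κ : Space M) :
    Summable fun i : ℕ => |((ω.1 i : ℕ) : ℝ) - ((κ.1 i : ℕ) : ℝ)| / 2 ^ (i + 1) :=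
  Summable.of_nonneg_of_le (fun i => by positivity) (term_le M ω κ) (summable_geometric_two' _)

theorem dist_le (ω κ : Space M) (m : ℕ) (h : ∀ j < m, ω.1 j = κ.1 j) :
    dist' M ω κ ≤ (k : ℝ) / 2 ^ m := by
  unfold dist'
  rw [← (summ M ω κ).sum_add_tsum_nat_add m]
  have h0 : ∑ i ∈ Finset.range m, |((ω.1 i : ℕ) : ℝ) - ((κ.1 i : ℕ) : ℝ)| / 2 ^ (i + 1) = 0 := by
    apply Finset.sum_eq_zero
    intro i hi
    rw [h i (Finset.mem_range.mp hi)]; simp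
  rw [h0, zero_add, ← tsum_geometric_two' ((k : ℝ) / 2 ^ m)]
  refine Summable.tsum_le_tsum (fun i => ?_) ((summable_nat_add_iff m).mpr (summ M ω κ))
    (summable_geometric_two' _)
  refine (term_le M ω κ (i + m)).trans (le_of_eq ?_)
  rw [pow_add]; field_simp

theorem dist_ge (ω κ : Space M) (h : ω.1 0 ≠ κ.1 0) : 1 / 2 ≤ dist' M ω κ := by
  unfold dist'
  refine le_trans ?_ ((summ M ω κ).le_tsum 0 (fun j _ => by positivity))
  have h1 : ((ω.1 0 : ℕ) : ℤ) - ((κ.1 0 : ℕ) : ℤ) ≠ 0 := by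
    intro h'
    apply h
    apply Fin.ext
    omega
  have h2 := Int.one_le_abs h1
  have h3 : (1 : ℝ) ≤ |((ω.1 0 : ℕ) : ℝ) - ((κ.1 0 : ℕ) : ℝ)| := by exact_mod_cast h2
  norm_num
  linarith

theorem sep_upper (μ : Measure (Space M)) [IsProbabilityMeasure μ] (n m : ℕ) (ε : ℝ)
    (hm : (k : ℝ) / 2 ^ m ≤ ε) (E : Finset (Space M)) (hE : IsSep M n ε E) :
    ∑ ω ∈ E, (μ (cyl M n (word M n ω))).toReal ≤ (k : ℝ) ^ m := by
  classical
  let g : Space M → (Fin n → Fin k) × (Fin m → Fin k) :=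
    fun ω => (word M n ω, fun j => ω.1 (n + j.1))
  have hg : Set.InjOn g E := by
    intro ω hω κ hκ heq
    by_contra hne
    obtain ⟨i, hi, hd⟩ := hE ω hω κ hκ hne
    have h1 := congrArg Prod.fst heq
    have h2 := congrArg Prod.snd heq
    have := dist_le M ((shift M)^[i] ω) ((shift M)^[i] κ) m (by
      intro j hj
      rw [iter_shift, iter_shift]
      by_cases hc : j + i < n
      · exact congrFun h1 ⟨j + i, hc⟩
      · have := congrFun h2 ⟨j + i - n, by omega⟩
        simp only [g] at this
        rwa [show n + (j + i - n) = j + i by omega] at this)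
    linarith
  calc ∑ ω ∈ E, (μ (cyl M n (word M n ω))).toReal
      = ∑ p ∈ E.image g, (μ (cyl M n p.1)).toReal := by
        rw [Finset.sum_image hg]
    _ ≤ ∑ p : (Fin n → Fin k) × (Fin m → Fin k), (μ (cyl M n p.1)).toReal :=
        Finset.sum_le_sum_of_subset_of_nonneg (Finset.subset_univ _) (fun _ _ _ => by positivity)
    _ = (k : ℝ) ^ m := by
        rw [Fintype.sum_prod_type]
        simp [← Finset.mul_sum, sum_cyl]

theorem sep_lower (μ : Measure (Space M)) [IsProbabilityMeasure μ] (n : ℕ) (ε : ℝ)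
    (hε : ε < 1 / 2) : ∃ E : Finset (Space M), IsSep M n ε E ∧
    ∑ ω ∈ E, (μ (cyl M n (word M n ω))).toReal = 1 := by
  classical
  have hne : Nonempty (Space M) := μ.nonempty_of_neZero
  let W : Finset (Fin n → Fin k) := Finset.univ.filter fun w => (cyl M n w).Nonempty
  let c : (Fin n → Fin k) → Space M :=
    fun w => if h : (cyl M n w).Nonempty then h.some else Classical.choice hne
  have hc : ∀ w ∈ W, word M n (c w) = w := by
    intro w hw
    have h : (cyl M n w).Nonempty := (Finset.mem_filter.mp hw).2
    simp only [c, dif_pos h]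
    exact (mem_cyl_iff M n w _).mp h.some_mem
  refine ⟨W.image c, ?_, ?_⟩
  · intro ω hω κ hκ hn
    obtain ⟨w, hw, rfl⟩ := Finset.mem_image.mp hω
    obtain ⟨v, hv, rfl⟩ := Finset.mem_image.mp hκ
    have hwv : word M n (c w) ≠ word M n (c v) := by
      rw [hc w hw, hc v hv]
      rintro rfl
      exact hn rfl
    obtain ⟨i, hi⟩ := Function.ne_iff.mp hwv
    refine ⟨i.1, i.2, lt_of_lt_of_le hε (dist_ge M _ _ ?_)⟩
    rw [iter_shift, iter_shift, zero_add]
    exact hi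
  · rw [Finset.sum_image (fun w hw v hv h => by rw [← hc w hw, ← hc v hv, h]), ← sum_cyl M μ n]
    rw [Finset.sum_congr rfl (fun w hw => by rw [hc w hw])]
    apply Finset.sum_subset (Finset.subset_univ _)
    intro w _ hw
    have : cyl M n w = ∅ := by
      simpa [W, Set.not_nonempty_iff_eq_empty] using hw
    simp [this]

theorem pressure_zero (μ : Measure (Space M)) [IsProbabilityMeasure μ] (Ψ : ℕ → Space M → ℝ)
    (hΨ : ∀ n ω, Real.exp (Ψ n ω) = (μ (cyl M n (word M n ω))).toReal) : IsPressure M Ψ 0 := by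
  unfold IsPressure
  refine tendsto_const_nhds.congr' ?_
  have hmem : Set.Ioo (0 : ℝ) (1 / 2) ∈ 𝓝[>] (0 : ℝ) := Ioo_mem_nhdsGT (by norm_num)
  filter_upwards [hmem] with ε hε
  obtain ⟨m, hm⟩ : ∃ m : ℕ, (k : ℝ) / 2 ^ m ≤ ε := by
    obtain ⟨m, hm⟩ := pow_unbounded_of_one_lt ((k : ℝ) / ε) (by norm_num : (1 : ℝ) < 2)
    refine ⟨m, ?_⟩
    rw [div_lt_iff₀ hε.1] at hm
    rw [div_le_iff₀ (by positivity)]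
    linarith
  have hbd : ∀ n, ∀ s ∈ {s | ∃ E : Finset (Space M), IsSep M n ε E ∧
      s = ∑ ω ∈ E, Real.exp (Ψ n ω)}, s ≤ (k : ℝ) ^ m := by
    rintro n s ⟨E, hE, rfl⟩
    simp only [hΨ]
    exact sep_upper M μ n m ε hm E hE
  have hlow : ∀ n, 1 ≤ sepSum M Ψ n ε := by
    intro n
    obtain ⟨E, hE, h1⟩ := sep_lower M μ n ε hε.2
    refine le_csSup ⟨_, hbd n⟩ ⟨E, hE, ?_⟩
    simp only [hΨ, h1]
  have hup : ∀ n, sepSum M Ψ n ε ≤ (k : ℝ) ^ m := by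
    intro n
    obtain ⟨E, hE, h1⟩ := sep_lower M μ n ε hε.2
    exact csSup_le ⟨_, E, hE, rfl⟩ (hbd n)
  symm
  apply Tendsto.limsup_eq
  refine tendsto_of_tendsto_of_tendsto_of_le_of_le tendsto_const_nhds
    (tendsto_const_div_atTop_nhds_zero_nat (Real.log ((k : ℝ) ^ m))) ?_ ?_
  · intro n
    exact div_nonneg (Real.log_nonneg (hlow n)) (Nat.cast_nonneg n)
  · intro n
    have := Real.log_le_log (by linarith [hlow n]) (hup n)
    simp only
    gcongr

theorem bdd_of_cont (f : Space M → ℝ) (hf : Continuous f) : BddAbove (Set.range f) := by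
  haveI := isCompact_space M
  exact (isCompact_range hf).bddAbove

theorem asympAdd_aux [Nonempty (Space M)] (Φ Ψ : ℕ → Space M → ℝ) (P : ℝ) (L : ℕ → ℝ)
    (hL : Tendsto (fun n : ℕ => L n / n) atTop (𝓝 0)) (hΦ : AsympAdd M Φ)
    (hc : ∀ n, Continuous (Ψ n)) (h : ∀ n ω, |Ψ n ω - (Φ n ω - n * P)| ≤ L n) :
    AsympAdd M Ψ := by
  refine ⟨hc, fun ε hε => ?_⟩
  obtain ⟨ρ, hρ, hlim⟩ := hΦ.2 ε hε
  have hρ' : Continuous fun ω => ρ ω - P := hρ.sub continuous_const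
  refine ⟨fun ω => ρ ω - P, hρ', ?_⟩
  have hb : ∀ n ω, birk M (fun ω => ρ ω - P) n ω = birk M ρ n ω - n * P := by
    intro n ω
    simp [birk, Finset.sum_sub_distrib]
  have b1 : ∀ n, BddAbove (Set.range fun ω => |Φ n ω - birk M ρ n ω|) := fun n =>
    bdd_of_cont M _ ((hΦ.1 n).sub (cont_birk M ρ hρ n)).abs
  have b2 : ∀ n, BddAbove (Set.range fun ω => |Ψ n ω - birk M (fun ω => ρ ω - P) n ω|) := fun n =>
    bdd_of_cont M _ ((hc n).sub (cont_birk M _ hρ' n)).abs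
  refine aux_limsup _ _ _ ?_ ?_ hL ?_ ?_ ε hε hlim
  · intro n
    exact div_nonneg (Real.iSup_nonneg fun ω => abs_nonneg _) (Nat.cast_nonneg n)
  · intro n
    exact div_nonneg (Real.iSup_nonneg fun ω => abs_nonneg _) (Nat.cast_nonneg n)
  · refine Eventually.of_forall fun n => ?_
    rw [← add_div]
    gcongr
    refine ciSup_le fun ω => ?_
    have := le_ciSup (b1 n) ω
    have h1 := abs_le.mp (h n ω)
    have h2 := abs_le.mp this
    rw [hb, abs_le]
    constructor <;> linarith
  · refine Eventually.of_forall fun n => ?_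
    rw [← add_div]
    gcongr
    refine ciSup_le fun ω => ?_
    have := le_ciSup (b2 n) ω
    have h1 := abs_le.mp (h n ω)
    have h2 := abs_le.mp this
    simp only [hb] at h2 ⊢
    rw [abs_le]
    constructor <;> linarith

end WG

open WG in
/-- Theorem `main-weak`: a weak Gibbs measure `μ` for an asymptotically
additive sequence `Φ` on a topologically mixing subshift of finite type is a Gibbs measure
for the asymptotically additive sequence `Ψ` given by `ψ_n(ω) = log μ(C_{i₁…i_n})`;
moreover `P(Ψ) = 0` and the Gibbs ratio equals `1`. -/
theorem weakGibbs_is_gibbs_for_asympAdd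
    {k : ℕ} (M : Matrix (Fin k) (Fin k) ℕ) (hmix : Mixing M)
    (Φ : ℕ → Space M → ℝ) (hΦ : AsympAdd M Φ) (P : ℝ) (hP : IsPressure M Φ P)
    (μ : Measure (Space M)) (hμ : IsProbabilityMeasure μ)
    (hwg : WeakGibbs M Φ P μ) :
    ∃ Ψ : ℕ → Space M → ℝ,
      (∀ n : ℕ, ∀ ω : Space M, Ψ n ω = Real.log ((μ (cyl M n (word M n ω))).toReal)) ∧
      AsympAdd M Ψ ∧ IsPressure M Ψ 0 ∧
      (∀ n : ℕ, ∀ w : Fin n → Fin k, ∀ ω ∈ cyl M n w,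
        (μ (cyl M n w)).toReal / Real.exp (Ψ n ω - n * 0) = 1) ∧
      Gibbs M Ψ 0 μ := by
  classical
  obtain ⟨K, hK, hKlim, hKb⟩ := hwg
  have hne : Nonempty (Space M) := μ.nonempty_of_neZero
  have hpos : ∀ n : ℕ, ∀ ω : Space M, 0 < (μ (cyl M n (word M n ω))).toReal := by
    intro n ω
    have h1 := (hKb n _ ω ((mem_cyl_iff M n _ ω).mpr rfl)).1
    have h2 : 0 < 1 / K n := one_div_pos.mpr (hK n)
    exact (div_pos_iff_of_pos_right (Real.exp_pos _)).mp (h2.trans_le h1)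
  have hexp : ∀ n : ℕ, ∀ ω : Space M,
      Real.exp (Real.log ((μ (cyl M n (word M n ω))).toReal))
        = (μ (cyl M n (word M n ω))).toReal := fun n ω => Real.exp_log (hpos n ω)
  have hratio : ∀ n : ℕ, ∀ w : Fin n → Fin k, ∀ ω ∈ cyl M n w,
      (μ (cyl M n w)).toReal /
        Real.exp (Real.log ((μ (cyl M n (word M n ω))).toReal) - n * 0) = 1 := by
    intro n w ω hω
    have hw := (mem_cyl_iff M n w ω).mp hω
    subst hw
    rw [mul_zero, sub_zero, hexp]
    exact div_self (hpos n ω).ne'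
  refine ⟨fun n ω => Real.log ((μ (cyl M n (word M n ω))).toReal), fun _ _ => rfl, ?_, ?_,
    hratio, ?_⟩
  · refine asympAdd_aux M Φ _ P (fun n => Real.log (K n)) hKlim hΦ ?_ ?_
    · intro n
      have : Continuous fun w : Fin n → Fin k => Real.log ((μ (cyl M n w)).toReal) :=
        continuous_of_discreteTopology
      exact this.comp (cont_word M n)
    · intro n ω
      obtain ⟨h1, h2⟩ := hKb n _ ω ((mem_cyl_iff M n _ ω).mpr rfl)
      have hr := div_pos (hpos n ω) (Real.exp_pos (Φ n ω - n * P))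
      have g1 := Real.log_le_log (one_div_pos.mpr (hK n)) h1
      have g2 := Real.log_le_log hr h2
      rw [Real.log_div (hpos n ω).ne' (Real.exp_pos _).ne', Real.log_exp] at g1 g2
      rw [one_div, Real.log_inv] at g1
      exact abs_le.mpr ⟨g1, g2⟩
  · exact pressure_zero M μ _ hexp
  · refine ⟨1, one_pos, fun n w ω hω => ?_⟩
    rw [hratio n w ω hω]
    norm_num
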